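/- arXiv:2311.01082 — 5 statements merged into one kernel-verified Lean document; each statement's English description precedes it below -/
import Mathlib

section
/- For every integer r ≥ 3, the family 𝓕(P_r) of all finite simple graphs containing no induced copy of the path P_r with r edges (and r+1 vertices) is feasible. -/
/-!
In a threshold graph any two neighbourhoods `N(u)`, `N(v)` are nested, up to `u` and `v` themselves.
This property passes to induced subgraphs, and a path `0 - 1 - 2 - 3 - ⋯` violates it at `u = 1`,
`v = 2`, so a family of induced path-free graphs contains every threshold graph. Threshold graphs
with any number `m` of edges exist: take the first `m` pairs of vertices in colexicographic order as
edges. Lowering an endpoint of a pair moves it earlier in that order, whence the nesting.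
-/

open SimpleGraph

/-- `(n, m)` is a feasible pair for a family `F` of finite simple graphs
(given, for each number of vertices `n`, as a predicate on simple graphs on `Fin n`):
some member of the family has exactly `n` vertices and exactly `m` edges. -/
def FeasiblePair (F : ∀ n : ℕ, SimpleGraph (Fin n) → Prop) (n m : ℕ) : Prop :=
  ∃ G : SimpleGraph (Fin n), F n G ∧ G.edgeSet.ncard = m

/-- A family of finite simple graphs is feasible if every pair `(n, m)` with
`n ≥ 1` and `0 ≤ m ≤ n(n-1)/2` is feasible for it. -/
def Feasible (F : ∀ n : ℕ, SimpleGraph (Fin n) → Prop) : Prop :=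
  ∀ n m : ℕ, 1 ≤ n → m ≤ n * (n - 1) / 2 → FeasiblePair F n m

/-- `G` is contained in `H` as an induced subgraph: there is an injective map of the
vertices of `G` into the vertices of `H` under which adjacency in `H` holds
if and only if it holds in `G`. -/
def IndContains {α β : Type*} (G : SimpleGraph α) (H : SimpleGraph β) : Prop :=
  ∃ f : α ↪ β, ∀ a b : α, H.Adj (f a) (f b) ↔ G.Adj a b

/-- The family `𝓕(G)` of all induced `G`-free finite simple graphs. -/
def IndFreeFamily {α : Type*} (G : SimpleGraph α) :
    ∀ n : ℕ, SimpleGraph (Fin n) → Prop :=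
  fun _ H => ¬ IndContains G H

/-- Threshold graphs, encoded by totality of the vicinal preorder: for any two vertices, the open
neighbourhood of one is contained in the closed neighbourhood of the other. -/
def IsThresholdGraph {α : Type*} (G : SimpleGraph α) : Prop :=
  ∀ u v, G.neighborSet u ⊆ insert v (G.neighborSet v) ∨
    G.neighborSet v ⊆ insert u (G.neighborSet u)

theorem IsThresholdGraph.of_indContains {α β : Type*} {G : SimpleGraph α} {H : SimpleGraph β}
    (hH : IsThresholdGraph H) (hGH : IndContains G H) : IsThresholdGraph G := by
  obtain ⟨f, hf⟩ := hGH
  have pullback {u v : α} (h : H.neighborSet (f u) ⊆ insert (f v) (H.neighborSet (f v))) :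
      G.neighborSet u ⊆ insert v (G.neighborSet v) := fun w hw =>
    (h ((hf u w).mpr hw)).imp (fun hwv => f.injective hwv) (hf v w).mp
  exact fun u v => (hH (f u) (f v)).imp pullback pullback

theorem not_isThresholdGraph_pathGraph {n : ℕ} (hn : 4 ≤ n) :
    ¬ IsThresholdGraph (pathGraph n) := by
  intro h
  rcases h ⟨1, by omega⟩ ⟨2, by omega⟩ with h | h
  · have h₀ := @h ⟨0, by omega⟩ (by simp [pathGraph_adj])
    simp [pathGraph_adj] at h₀
  · have h₃ := @h ⟨3, by omega⟩ (by simp [pathGraph_adj])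
    simp [pathGraph_adj] at h₃

theorem choose_two_succ (n : ℕ) : (n + 1).choose 2 = n.choose 2 + n := by
  rw [Nat.choose_succ_succ' n 1, Nat.choose_one_right, add_comm]

theorem choose_two_add_lt_choose_two {u v w : ℕ} (huv : u < v) (hvw : v < w) :
    v.choose 2 + u < w.choose 2 := calc
  v.choose 2 + u < v.choose 2 + v := by gcongr
  _ = (v + 1).choose 2 := (choose_two_succ v).symm
  _ ≤ w.choose 2 := Nat.choose_le_choose 2 hvw

theorem choose_two_add_inj {u v u' v' : ℕ} (huv : u < v) (huv' : u' < v')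
    (h : v.choose 2 + u = v'.choose 2 + u') : u = u' ∧ v = v' := by
  rcases lt_trichotomy v v' with hv | rfl | hv
  · have := choose_two_add_lt_choose_two huv hv
    omega
  · exact ⟨Nat.add_left_cancel h, rfl⟩
  · have := choose_two_add_lt_choose_two huv' hv
    omega

theorem exists_choose_two_add_eq {n k : ℕ} (hk : k < n.choose 2) :
    ∃ u v, u < v ∧ v < n ∧ v.choose 2 + u = k := by
  induction n with
  | zero => simp at hk
  | succ n ih =>
    rcases lt_or_ge k (n.choose 2) with hlt | hge
    · obtain ⟨u, v, huv, hv, huvk⟩ := ih hlt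
      exact ⟨u, v, huv, hv.trans n.lt_succ_self, huvk⟩
    · rw [choose_two_succ] at hk
      exact ⟨k - n.choose 2, n, by omega, n.lt_succ_self, by omega⟩

/-- The position of a pair of distinct vertices in the colexicographic order on such pairs,
counted from `0`. The value on the diagonal is junk. -/
def colexRank {n : ℕ} (e : Sym2 (Fin n)) : ℕ := (e.sup : ℕ).choose 2 + e.inf

theorem monotone_colexRank_mk {n : ℕ} (w : Fin n) : Monotone fun u => colexRank s(u, w) :=
  fun _ _ huv => add_le_add (Nat.choose_le_choose 2 (sup_le_sup_right huv w))
    (inf_le_inf_right w huv)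

theorem inf_lt_sup_of_mem_compl_diagSet {α : Type*} [LinearOrder α] {e : Sym2 α}
    (he : e ∈ Sym2.diagSetᶜ) : e.inf < e.sup := by
  induction e with
  | _ a b => simpa [eq_comm] using he

theorem bijOn_colexRank (n : ℕ) :
    Set.BijOn colexRank (Sym2.diagSet : Set (Sym2 (Fin n)))ᶜ (Set.Iio (n.choose 2)) := by
  refine ⟨fun e he => ?_, fun e he e' he' h => ?_, fun k hk => ?_⟩
  · exact choose_two_add_lt_choose_two (inf_lt_sup_of_mem_compl_diagSet he) e.sup.isLt
  · obtain ⟨hinf, hsup⟩ := choose_two_add_inj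
      (Fin.lt_def.mp (inf_lt_sup_of_mem_compl_diagSet he))
      (Fin.lt_def.mp (inf_lt_sup_of_mem_compl_diagSet he')) h
    exact Sym2.inf_eq_inf_and_sup_eq_sup.mp ⟨Fin.ext hinf, Fin.ext hsup⟩
  · obtain ⟨u, v, huv, hv, rfl⟩ := exists_choose_two_add_eq hk
    refine ⟨s(⟨u, huv.trans hv⟩, ⟨v, hv⟩), by simp [huv.ne], ?_⟩
    simp [colexRank, huv.le]

/-- The graph on `Fin n` whose edges are the first `m` pairs of distinct vertices in
colexicographic order (all of them if `m` exceeds their number). -/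
def colexGraph (n m : ℕ) : SimpleGraph (Fin n) :=
  fromEdgeSet (colexRank ⁻¹' Set.Iio m)

theorem ncard_edgeSet_colexGraph {n m : ℕ} (hm : m ≤ n.choose 2) :
    (colexGraph n m).edgeSet.ncard = m := by
  have hedge : (colexGraph n m).edgeSet = Sym2.diagSetᶜ ∩ colexRank ⁻¹' Set.Iio m := by
    rw [colexGraph, edgeSet_fromEdgeSet, Set.sdiff_eq, Set.inter_comm]
  have hbij := (bijOn_colexRank n).subset_right (Set.Iio_subset_Iio hm)
  rw [hedge, hbij.ncard_eq, Set.ncard_Iio_nat]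

theorem neighborSet_colexGraph_subset {n : ℕ} (m : ℕ) {u v : Fin n} (huv : u ≤ v) :
    (colexGraph n m).neighborSet v ⊆ insert u ((colexGraph n m).neighborSet u) := by
  rintro w ⟨hvw, -⟩
  rcases eq_or_ne w u with rfl | hwu
  · exact Set.mem_insert w _
  · exact Or.inr ⟨(monotone_colexRank_mk w huv).trans_lt hvw, hwu.symm⟩

theorem isThresholdGraph_colexGraph (n m : ℕ) : IsThresholdGraph (colexGraph n m) := fun u v =>
  (le_total v u).imp (neighborSet_colexGraph_subset m) (neighborSet_colexGraph_subset m)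

theorem feasible_of_forall_isThresholdGraph {F : ∀ n : ℕ, SimpleGraph (Fin n) → Prop}
    (hF : ∀ (n : ℕ) (G : SimpleGraph (Fin n)), IsThresholdGraph G → F n G) : Feasible F :=
  fun n m _ hm => ⟨colexGraph n m, hF n _ (isThresholdGraph_colexGraph n m),
    ncard_edgeSet_colexGraph (by rwa [Nat.choose_two_right])⟩

/-- For every `r ≥ 3`, the family of all graphs with no induced copy of the path `P_r`
with `r` edges (i.e. `r + 1` vertices) is feasible. -/
theorem feasible_indFreeFamily_path (r : ℕ) (hr : 3 ≤ r) :
    Feasible (IndFreeFamily (SimpleGraph.pathGraph (r + 1))) :=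
  feasible_of_forall_isThresholdGraph fun _ _ hG hpath =>
    not_isThresholdGraph_pathGraph (by omega) (hG.of_indContains hpath)
end

section
/- For every integer r ≥ 2, the family 𝓕(rK_2) of all finite simple graphs containing no induced copy of rK_2, the disjoint union of r edges, is feasible. -/
open SimpleGraph

/-- The matching `rK_2`: the disjoint union of `r` edges, on `2r` vertices. -/
def matchingGraph (r : ℕ) : SimpleGraph (Fin r × Fin 2) :=
  SimpleGraph.fromRel (fun a b => a.1 = b.1)

/-!
Add edges to the empty graph on an ordered vertex set one at a time, each time joining the first
vertex `d` that is not yet adjacent to everything below it to some smaller vertex. This reaches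
every number of edges, and if `c < d` are adjacent at some stage, then all vertices below `d` are
pairwise adjacent. In an induced copy of `rK_2`, let `d` be the largest vertex: the rest of the copy
would then be a clique, whereas for `r ≥ 2` the partner of `d` is not adjacent to the other edges.
-/

section QuasiComplete

variable {V W : Type*} [LinearOrder V] {G : SimpleGraph V}

/-- The quasi-complete graphs on an ordered vertex set: below every vertex that has a smaller
neighbour, all vertices are pairwise adjacent. For finite `V` these are the graphs made of a clique
on an initial segment, the next vertex joined to any part of that clique, and isolated vertices.
They realise every number of edges without inducing `2K_2`. The order on `V` is fixed, so
the notion is not invariant under isomorphism. -/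
def IsQuasiComplete (G : SimpleGraph V) : Prop :=
  ∀ ⦃c d : V⦄, c < d → G.Adj c d → G.IsClique (Set.Iio d)

theorem isQuasiComplete_bot : IsQuasiComplete (⊥ : SimpleGraph V) :=
  fun _ _ _ h => h.elim

theorem IsQuasiComplete.exists_isClique_compl [Finite W] [Nonempty W] {H : SimpleGraph W}
    (hG : IsQuasiComplete G) (f : H ↪g G) : ∃ p, ∀ q, H.Adj p q → H.IsClique {p}ᶜ := by
  obtain ⟨p, hp⟩ := Finite.exists_max f
  have f_lt {x : W} (hx : x ≠ p) : f x < f p := (hp x).lt_of_ne (f.injective.ne hx)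
  refine ⟨p, fun q hpq x hx y hy hxy => f.map_adj_iff.mp ?_⟩
  exact hG (f_lt hpq.ne') (f.map_adj_iff.mpr hpq.symm) (f_lt hx) (f_lt hy) (f.injective.ne hxy)

theorem exists_lt_not_adj_isClique_Iio [WellFoundedLT V] (hG : G ≠ ⊤) :
    ∃ a b, a < b ∧ ¬G.Adj a b ∧ G.IsClique (Set.Iio b) := by
  have exists_nonadj : ∃ b, ∃ a < b, ¬G.Adj a b := by
    obtain ⟨a, b, hne, hab⟩ := ne_top_iff_exists_not_adj.mp hG
    rcases hne.lt_or_gt with h | h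
    · exact ⟨b, a, h, hab⟩
    · exact ⟨a, b, h, fun hba => hab hba.symm⟩
  obtain ⟨b, ⟨a, hab, hnadj⟩, hmin⟩ := exists_minimal_of_wellFoundedLT _ exists_nonadj
  have adj_of_lt {x y : V} (hxy : x < y) (hy : y < b) : G.Adj x y := by
    by_contra h
    exact (hmin ⟨x, hxy, h⟩ hy.le).not_gt hy
  refine ⟨a, b, hab, hnadj, fun x hx y hy hxy => ?_⟩
  rcases hxy.lt_or_gt with h | h
  · exact adj_of_lt h hy
  · exact (adj_of_lt h hx).symm

theorem IsQuasiComplete.sup_edge (hG : IsQuasiComplete G) {a b : V} (hab : a < b)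
    (hb : G.IsClique (Set.Iio b)) : IsQuasiComplete (G ⊔ edge a b) := by
  intro c d hcd hadj
  refine IsClique.mono le_sup_left ?_
  rcases hadj with hadj | hadj
  · exact hG hcd hadj
  · rcases ((edge_adj ..).mp hadj).1 with ⟨-, rfl⟩ | ⟨rfl, rfl⟩
    · exact hb
    · exact absurd hab hcd.not_gt

theorem exists_isQuasiComplete_ncard_edgeSet [Finite V] {m : ℕ}
    (hm : m ≤ (Nat.card V).choose 2) :
    ∃ G : SimpleGraph V, IsQuasiComplete G ∧ G.edgeSet.ncard = m := by
  induction m with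
  | zero => exact ⟨⊥, isQuasiComplete_bot, by rw [edgeSet_bot, Set.ncard_empty]⟩
  | succ m ih =>
    obtain ⟨G, hG, hcard⟩ := ih (Nat.le_of_succ_le hm)
    have hG_ne_top : G ≠ ⊤ := by
      rintro rfl
      rw [edgeSet_top, Sym2.ncard_diagSet_compl] at hcard
      omega
    obtain ⟨a, b, hab, hnadj, hb⟩ := exists_lt_not_adj_isClique_Iio hG_ne_top
    refine ⟨G ⊔ edge a b, hG.sup_edge hab hb, ?_⟩
    rw [edgeSet_sup, edgeSet_edge_of_ne hab.ne, Set.union_singleton,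
      Set.ncard_insert_of_notMem (by rwa [mem_edgeSet]), hcard]

end QuasiComplete

theorem matchingGraph_adj {r : ℕ} {a b : Fin r × Fin 2} :
    (matchingGraph r).Adj a b ↔ a ≠ b ∧ a.1 = b.1 := by
  simp only [matchingGraph, fromRel_adj, eq_comm (a := b.1), or_self]

theorem exists_matchingGraph_adj_not_isClique_compl {r : ℕ} (hr : 2 ≤ r) (p : Fin r × Fin 2) :
    ∃ q, (matchingGraph r).Adj p q ∧ ¬(matchingGraph r).IsClique {p}ᶜ := by
  have : Nontrivial (Fin r) := Fin.nontrivial_iff_two_le.mpr hr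
  obtain ⟨i, hi⟩ := exists_ne p.1
  obtain ⟨j, hj⟩ := exists_ne p.2
  have hq : (p.1, j) ≠ p := fun h => hj (congrArg Prod.snd h)
  have hu : (i, j) ≠ p := fun h => hi (congrArg Prod.fst h)
  have hqu : (i, j) ≠ (p.1, j) := fun h => hi (congrArg Prod.fst h)
  exact ⟨(p.1, j), matchingGraph_adj.mpr ⟨hq.symm, rfl⟩,
    fun hclique => hi (matchingGraph_adj.mp (hclique hu hq hqu)).2⟩

theorem IsQuasiComplete.not_indContains_matchingGraph {V : Type*} [LinearOrder V]
    {G : SimpleGraph V} (hG : IsQuasiComplete G) {r : ℕ} (hr : 2 ≤ r) :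
    ¬IndContains (matchingGraph r) G := by
  rintro ⟨f, hf⟩
  have : NeZero r := ⟨by omega⟩
  let φ : matchingGraph r ↪g G := ⟨f, hf _ _⟩
  obtain ⟨p, hp⟩ := hG.exists_isClique_compl φ
  obtain ⟨q, hpq, hnclique⟩ := exists_matchingGraph_adj_not_isClique_compl hr p
  exact hnclique (hp q hpq)

/-- For every `r ≥ 2`, the family of all induced `rK_2`-free graphs is feasible. -/
theorem feasible_indFreeFamily_matching (r : ℕ) (hr : 2 ≤ r) :
    Feasible (IndFreeFamily (matchingGraph r)) := by
  intro n m _ hm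
  have hm_choose : m ≤ (Nat.card (Fin n)).choose 2 := by
    rwa [Nat.card_fin, Nat.choose_two_right]
  obtain ⟨G, hG, hcard⟩ := exists_isQuasiComplete_ncard_edgeSet hm_choose
  exact ⟨G, hG.not_indContains_matchingGraph hr, hcard⟩
end

section
/- For nonnegative integers p and r with p + r ≥ 2, the family 𝓕(S(p,r)) of all induced S(p,r)-free graphs is feasible if and only if p ≥ 1 and r ≥ 3. In particular, 𝓕(S(p,r)) is not feasible when p = 0 or r = 0, and not feasible when p ≥ 1 and r ∈ {1,2}. -/
open SimpleGraph

/-- The complete split graph `S(p,r) = K_p + ∁K_r`: a clique on `p` vertices, an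
independent set on `r` vertices, and all edges between the two parts. -/
def splitGraph (p r : ℕ) : SimpleGraph (Fin p ⊕ Fin r) :=
  SimpleGraph.fromRel (fun a _ => a.isLeft)

/-!
If `p = 0` or `r ≤ 2`, then `S(p,r)` or its complement has at most one edge, so `S(p,r)` is
determined up to isomorphism by its numbers of vertices and edges, and the pair formed by these two
numbers is not feasible.

If `p ≥ 1` and `r ≥ 3`, then `S(p,r)` contains an induced claw `S(1,3)`, so it is enough to realise
every pair by a claw-free graph. A clique on `a` vertices together with one more vertex joined to
`b` of them, all other vertices being isolated, is claw-free, and every `m` is of the form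
`a.choose 2 + b` with `b ≤ a`.
-/

section EdgeCount

variable {V W : Type*}

theorem ncard_edgeSet_top [Finite V] :
    (⊤ : SimpleGraph V).edgeSet.ncard = (Nat.card V).choose 2 := by
  classical
  have := Fintype.ofFinite V
  rw [← coe_edgeFinset, Set.ncard_coe_finset, card_edgeFinset_top_eq_card_choose_two,
    Nat.card_eq_fintype_card]

theorem ncard_edgeSet_add_ncard_edgeSet_compl [Finite V] (G : SimpleGraph V) :
    G.edgeSet.ncard + Gᶜ.edgeSet.ncard = (Nat.card V).choose 2 := by
  rw [← Set.ncard_union_eq (disjoint_edgeSet.2 disjoint_compl_right), ← edgeSet_sup,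
    sup_compl_eq_top, ncard_edgeSet_top]

theorem ncard_edgeSet_sum [Finite V] [Finite W] (G : SimpleGraph V) (H : SimpleGraph W) :
    (G ⊕g H).edgeSet.ncard = G.edgeSet.ncard + H.edgeSet.ncard := by
  simp only [← Nat.card_coe_set_eq]
  rw [Nat.card_congr edgeSetSumEquiv, Nat.card_sum]

theorem ncard_edgeSet_sup_edge [Finite V] {G : SimpleGraph V} {u v : V} (huv : u ≠ v)
    (hG : ¬ G.Adj u v) : (G ⊔ edge u v).edgeSet.ncard = G.edgeSet.ncard + 1 := by
  rw [edgeSet_sup, edgeSet_edge_of_ne huv, Set.union_singleton,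
    Set.ncard_insert_of_notMem (G.mem_edgeSet.not.2 hG)]

end EdgeCount

section FewEdges

variable {V W : Type*}

theorem exists_eq_edge_of_ncard_edgeSet_eq_one {G : SimpleGraph V} (hG : G.edgeSet.ncard = 1) :
    ∃ u v, u ≠ v ∧ G = edge u v := by
  obtain ⟨⟨u, v⟩, he⟩ := Set.ncard_eq_one.1 hG
  have huv : G.Adj u v := G.mem_edgeSet.1 (he ▸ Set.mem_singleton _)
  exact ⟨u, v, huv.ne, edgeSet_injective (he.trans (edgeSet_edge_of_ne huv.ne).symm)⟩

theorem exists_equiv_apply_eq_apply_eq (e : V ≃ W) {u v : V} {u' v' : W} (huv : u ≠ v)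
    (huv' : u' ≠ v') : ∃ f : V ≃ W, f u = u' ∧ f v = v' := by
  obtain ⟨g, hu, hv⟩ := MulAction.is_two_pretransitive_iff.1
    (Equiv.Perm.isMultiplyPretransitive W 2) (e.injective.ne huv) huv'
  exact ⟨e.trans g, hu, hv⟩

theorem nonempty_iso_edge (e : V ≃ W) {u v : V} {u' v' : W} (huv : u ≠ v) (huv' : u' ≠ v') :
    Nonempty (edge u v ≃g edge u' v') := by
  obtain ⟨f, rfl, rfl⟩ := exists_equiv_apply_eq_apply_eq e huv huv'
  exact ⟨f, by simp only [edge_adj, f.injective.eq_iff, ne_eq, implies_true]⟩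

theorem nonempty_iso_of_ncard_edgeSet_le_one [Finite V] {G : SimpleGraph V} {H : SimpleGraph W}
    (e : V ≃ W) (hGH : G.edgeSet.ncard = H.edgeSet.ncard) (hG : G.edgeSet.ncard ≤ 1) :
    Nonempty (G ≃g H) := by
  have : Finite W := .of_equiv V e
  obtain h0 | h1 := Nat.le_one_iff_eq_zero_or_eq_one.1 hG
  · obtain rfl : G = ⊥ := edgeSet_eq_empty.1 ((Set.ncard_eq_zero).1 h0)
    obtain rfl : H = ⊥ := edgeSet_eq_empty.1 ((Set.ncard_eq_zero).1 (hGH ▸ h0))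
    exact ⟨e, Iff.rfl⟩
  · obtain ⟨u, v, huv, rfl⟩ := exists_eq_edge_of_ncard_edgeSet_eq_one h1
    obtain ⟨u', v', huv', rfl⟩ := exists_eq_edge_of_ncard_edgeSet_eq_one (hGH ▸ h1)
    exact nonempty_iso_edge e huv huv'

end FewEdges

section Feasible

variable {V W : Type*}

theorem indContains_iff_isIndContained {G : SimpleGraph V} {H : SimpleGraph W} :
    IndContains G H ↔ G ⊴ H :=
  ⟨fun ⟨f, hf⟩ ↦ ⟨⟨f, hf _ _⟩⟩, fun ⟨f⟩ ↦ ⟨f.toEmbedding, fun _ _ ↦ f.map_adj_iff⟩⟩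

theorem Feasible.mono {F F' : ∀ n : ℕ, SimpleGraph (Fin n) → Prop}
    (hFF' : ∀ n G, F n G → F' n G) (hF : Feasible F) : Feasible F' :=
  fun n m hn hm ↦
    let ⟨G, hG, hGm⟩ := hF n m hn hm
    ⟨G, hFF' n G hG, hGm⟩

theorem Feasible.indFreeFamily_mono {G : SimpleGraph V} {H : SimpleGraph W} (hGH : G ⊴ H)
    (hG : Feasible (IndFreeFamily G)) : Feasible (IndFreeFamily H) :=
  hG.mono fun _ _ hfree hH ↦ hfree <|
    indContains_iff_isIndContained.2 <| hGH.trans <| indContains_iff_isIndContained.1 hH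

variable [Finite V] [Nonempty V] {G : SimpleGraph V}

theorem not_feasible_indFreeFamily_of_forall_isIndContained
    (hG : ∀ H : SimpleGraph (Fin (Nat.card V)), G.edgeSet.ncard = H.edgeSet.ncard → G ⊴ H) :
    ¬ Feasible (IndFreeFamily G) := by
  intro hF
  have hle : G.edgeSet.ncard ≤ Nat.card V * (Nat.card V - 1) / 2 := by
    rw [← Nat.choose_two_right, ← ncard_edgeSet_add_ncard_edgeSet_compl G]
    exact Nat.le_add_right _ _
  obtain ⟨H, hfree, hH⟩ := hF (Nat.card V) G.edgeSet.ncard Nat.card_pos hle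
  exact hfree (indContains_iff_isIndContained.2 (hG H hH.symm))

theorem not_feasible_indFreeFamily_of_ncard_edgeSet_le_one (hG : G.edgeSet.ncard ≤ 1) :
    ¬ Feasible (IndFreeFamily G) :=
  not_feasible_indFreeFamily_of_forall_isIndContained fun _ hGH ↦
    (nonempty_iso_of_ncard_edgeSet_le_one (Finite.equivFin V) hGH hG).map Iso.toEmbedding

theorem not_feasible_indFreeFamily_of_ncard_edgeSet_compl_le_one (hG : Gᶜ.edgeSet.ncard ≤ 1) :
    ¬ Feasible (IndFreeFamily G) := by
  refine not_feasible_indFreeFamily_of_forall_isIndContained fun H hGH ↦ ?_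
  have hcompl : Gᶜ.edgeSet.ncard = Hᶜ.edgeSet.ncard := by
    have hsumG := ncard_edgeSet_add_ncard_edgeSet_compl G
    have hsumH := ncard_edgeSet_add_ncard_edgeSet_compl H
    rw [Nat.card_fin] at hsumH
    omega
  obtain ⟨f⟩ := nonempty_iso_of_ncard_edgeSet_le_one (Finite.equivFin V) hcompl hG
  exact compl_isIndContained_compl.1 ⟨f.toEmbedding⟩

end Feasible

section SplitGraph

theorem splitGraph_adj {p r : ℕ} {x y : Fin p ⊕ Fin r} :
    (splitGraph p r).Adj x y ↔ x ≠ y ∧ (x.isLeft ∨ y.isLeft) :=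
  fromRel_adj ..

theorem splitGraph_isIndContained {p p' r r' : ℕ} (hp : p ≤ p') (hr : r ≤ r') :
    splitGraph p r ⊴ splitGraph p' r' := by
  let f := (Fin.castLEEmb hp).sumMap (Fin.castLEEmb hr)
  refine ⟨f, fun {x y} ↦ ?_⟩
  rw [splitGraph_adj, splitGraph_adj, f.injective.ne_iff]
  simp only [f, Function.Embedding.coe_sumMap, Sum.isLeft_map]

theorem splitGraph_zero_left (r : ℕ) : splitGraph 0 r = ⊥ := by
  ext (x | x) (y | y)
  · exact x.elim0
  · exact x.elim0
  · exact y.elim0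
  · simp [splitGraph_adj]

theorem compl_splitGraph (p r : ℕ) :
    (splitGraph p r)ᶜ = (⊥ : SimpleGraph (Fin p)) ⊕g (⊤ : SimpleGraph (Fin r)) := by
  ext (x | x) (y | y) <;> simp [splitGraph_adj]

theorem ncard_edgeSet_compl_splitGraph (p r : ℕ) :
    (splitGraph p r)ᶜ.edgeSet.ncard = r.choose 2 := by
  rw [compl_splitGraph, ncard_edgeSet_sum, edgeSet_bot, Set.ncard_empty, ncard_edgeSet_top,
    Nat.card_fin, zero_add]

theorem not_feasible_indFreeFamily_splitGraph_zero_left {r : ℕ} (hr : 1 ≤ r) :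
    ¬ Feasible (IndFreeFamily (splitGraph 0 r)) := by
  have : Nonempty (Fin 0 ⊕ Fin r) := ⟨.inr ⟨0, hr⟩⟩
  apply not_feasible_indFreeFamily_of_ncard_edgeSet_le_one
  rw [splitGraph_zero_left, edgeSet_bot, Set.ncard_empty]
  exact Nat.zero_le 1

theorem not_feasible_indFreeFamily_splitGraph_of_le_two {p r : ℕ} (hp : 1 ≤ p) (hr : r ≤ 2) :
    ¬ Feasible (IndFreeFamily (splitGraph p r)) := by
  have : Nonempty (Fin p ⊕ Fin r) := ⟨.inl ⟨0, hp⟩⟩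
  apply not_feasible_indFreeFamily_of_ncard_edgeSet_compl_le_one
  calc (splitGraph p r)ᶜ.edgeSet.ncard = r.choose 2 := ncard_edgeSet_compl_splitGraph p r
    _ ≤ Nat.choose 2 2 := Nat.choose_le_choose 2 hr

end SplitGraph

/-- The quasi-clique on the vertices `0, …, n - 1`: the vertices below `a` form a clique, the vertex
`a` is joined to the vertices below `b`, and all vertices above `a` are isolated. Intended for
`b ≤ a < n`. -/
def quasiClique (n a b : ℕ) : SimpleGraph (Fin n) :=
  fromRel fun i j ↦ i < j ∧ (j.val < a ∨ j.val = a ∧ i.val < b)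

namespace quasiClique

variable {n a b : ℕ} {i j k : Fin n}

theorem adj_iff : (quasiClique n a b).Adj i j ↔
    i < j ∧ (j.val < a ∨ j.val = a ∧ i.val < b) ∨
      j < i ∧ (i.val < a ∨ i.val = a ∧ j.val < b) := by
  rw [quasiClique, fromRel_adj, and_iff_right_of_imp]
  rintro (⟨h, -⟩ | ⟨h, -⟩)
  exacts [h.ne, h.ne']

theorem zero_zero : quasiClique n 0 0 = ⊥ := by
  ext i j
  simp only [adj_iff, bot_adj, Nat.not_lt_zero, and_false, or_self]

theorem self_right : quasiClique n a a = quasiClique n (a + 1) 0 := by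
  ext i j
  simp only [adj_iff, Fin.lt_def]
  omega

theorem succ_right (ha : a < n) (hb : b < a) :
    quasiClique n a (b + 1) = quasiClique n a b ⊔ edge ⟨b, hb.trans ha⟩ ⟨a, ha⟩ := by
  ext i j
  simp only [sup_adj, edge_adj, adj_iff, Fin.lt_def, Fin.ext_iff, ne_eq]
  omega

theorem ncard_edgeSet_eq_add (ha : a < n) (hb : b ≤ a) :
    (quasiClique n a b).edgeSet.ncard = (quasiClique n a 0).edgeSet.ncard + b := by
  induction b with
  | zero => rfl
  | succ b ih =>
    have hba : b < a := hb
    have hne : (⟨b, hba.trans ha⟩ : Fin n) ≠ ⟨a, ha⟩ := Fin.ne_of_lt hba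
    have hnadj : ¬ (quasiClique n a b).Adj ⟨b, hba.trans ha⟩ ⟨a, ha⟩ := by
      simp only [adj_iff, Fin.lt_def]
      omega
    rw [succ_right ha hba, ncard_edgeSet_sup_edge hne hnadj, ih hba.le, add_assoc]

theorem ncard_edgeSet_zero_right (ha : a < n) :
    (quasiClique n a 0).edgeSet.ncard = a.choose 2 := by
  induction a with
  | zero => rw [zero_zero, edgeSet_bot, Set.ncard_empty, Nat.choose_zero_succ]
  | succ a ih =>
    have ha' := Nat.lt_of_succ_lt ha
    rw [← self_right, ncard_edgeSet_eq_add ha' le_rfl, ih ha', Nat.choose_succ_succ' a 1,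
      Nat.choose_one_right, add_comm]

theorem ncard_edgeSet (ha : a < n) (hb : b ≤ a) :
    (quasiClique n a b).edgeSet.ncard = a.choose 2 + b := by
  rw [ncard_edgeSet_eq_add ha hb, ncard_edgeSet_zero_right ha]

theorem le_of_adj (h : (quasiClique n a b).Adj i j) : i.val ≤ a := by
  simp only [adj_iff, Fin.lt_def] at h
  omega

theorem adj_of_lt_of_lt (hij : i ≠ j) (hi : i.val < a) (hj : j.val < a) :
    (quasiClique n a b).Adj i j := by
  simp only [adj_iff, hi, hj, true_or, and_true]
  exact hij.lt_or_gt

theorem eq_or_eq_of_not_adj (hij : i ≠ j) (hnadj : ¬ (quasiClique n a b).Adj i j)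
    (hi : (quasiClique n a b).Adj i k) (hj : (quasiClique n a b).Adj j k) :
    i.val = a ∨ j.val = a := by
  by_contra! hne
  exact hnadj <| adj_of_lt_of_lt hij ((le_of_adj hi).lt_of_ne hne.1) ((le_of_adj hj).lt_of_ne hne.2)

theorem not_splitGraph_one_three_isIndContained : ¬ splitGraph 1 3 ⊴ quasiClique n a b := by
  rintro ⟨f⟩
  let leaf (i : Fin 3) : Fin n := f (.inr i)
  have leaf_ne {i j : Fin 3} (hij : i ≠ j) : leaf i ≠ leaf j :=
    f.injective.ne (Sum.inr_injective.ne hij)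
  have leaf_adj (i : Fin 3) : (quasiClique n a b).Adj (leaf i) (f (.inl 0)) :=
    f.map_adj_iff.2 (splitGraph_adj.2 ⟨Sum.inr_ne_inl, .inr rfl⟩)
  have leaf_not_adj (i j : Fin 3) : ¬ (quasiClique n a b).Adj (leaf i) (leaf j) := by
    simp [leaf, f.map_adj_iff, splitGraph_adj]
  have leaf_eq {i j : Fin 3} (hij : i ≠ j) : (leaf i).val = a ∨ (leaf j).val = a :=
    eq_or_eq_of_not_adj (leaf_ne hij) (leaf_not_adj i j) (leaf_adj i) (leaf_adj j)
  have leaf_eq_unique {i j : Fin 3} (hij : i ≠ j) (hi : (leaf i).val = a) : (leaf j).val ≠ a :=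
    fun hj ↦ leaf_ne hij (Fin.ext (hi.trans hj.symm))
  obtain h0 | h1 := leaf_eq (i := 0) (j := 1) (by decide)
  · obtain h1 | h2 := leaf_eq (i := 1) (j := 2) (by decide)
    exacts [leaf_eq_unique (by decide) h0 h1, leaf_eq_unique (by decide) h0 h2]
  · obtain h0 | h2 := leaf_eq (i := 0) (j := 2) (by decide)
    exacts [leaf_eq_unique (by decide) h1 h0, leaf_eq_unique (by decide) h1 h2]

end quasiClique

theorem exists_eq_choose_two_add {n m : ℕ} (hm : m ≤ (n + 1).choose 2) :
    ∃ a ≤ n, ∃ b ≤ a, m = a.choose 2 + b := by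
  induction n with
  | zero => exact ⟨0, le_rfl, 0, le_rfl, by simpa using hm⟩
  | succ n ih =>
    obtain hle | hlt := le_or_gt m ((n + 1).choose 2)
    · obtain ⟨a, ha, b, hb, rfl⟩ := ih hle
      exact ⟨a, Nat.le_succ_of_le ha, b, hb, rfl⟩
    · have hsucc := Nat.choose_succ_left (n + 1) 2 two_pos
      rw [Nat.choose_one_right] at hsucc
      exact ⟨n + 1, le_rfl, m - (n + 1).choose 2, by omega, by omega⟩

theorem feasible_indFreeFamily_splitGraph_one_three :
    Feasible (IndFreeFamily (splitGraph 1 3)) := by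
  intro n m hn hm
  obtain ⟨n, rfl⟩ := Nat.exists_eq_add_of_le' hn
  rw [← Nat.choose_two_right] at hm
  obtain ⟨a, ha, b, hb, rfl⟩ := exists_eq_choose_two_add hm
  exact ⟨quasiClique (n + 1) a b,
    indContains_iff_isIndContained.not.2 quasiClique.not_splitGraph_one_three_isIndContained,
    quasiClique.ncard_edgeSet (Nat.lt_succ_of_le ha) hb⟩

/-- For `p + r ≥ 2`, the family `𝓕(S(p,r))` of all induced `S(p,r)`-free graphs is
feasible if and only if `p ≥ 1` and `r ≥ 3`; in particular it is not feasible when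
`p = 0` or `r = 0`, nor when `p ≥ 1` and `r ∈ {1, 2}`. -/
theorem feasible_indFreeFamily_splitGraph_iff (p r : ℕ) (hpr : 2 ≤ p + r) :
    Feasible (IndFreeFamily (splitGraph p r)) ↔ (1 ≤ p ∧ 3 ≤ r) := by
  constructor
  · intro hF
    obtain rfl | hp := Nat.eq_zero_or_pos p
    · exact absurd hF (not_feasible_indFreeFamily_splitGraph_zero_left (by omega))
    · refine ⟨hp, ?_⟩
      by_contra! hr
      exact not_feasible_indFreeFamily_splitGraph_of_le_two hp (Nat.le_of_lt_succ hr) hF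
  · rintro ⟨hp, hr⟩
    exact feasible_indFreeFamily_splitGraph_one_three.indFreeFamily_mono
      (splitGraph_isIndContained hp hr)
end

section
/- For all integers p ≥ 4, r ≥ 0, and q with 2 ≤ q ≤ p − 2, the family 𝓕(H(p,q,r)) of all induced H(p,q,r)-free graphs is feasible. -/
/-!
In a complete multipartite graph non-adjacency is transitive, so adding isolated vertices to one
gives a graph in which no non-isolated vertex misses both ends of an edge. In `H(p, q, r)` the
vertex `0` misses both ends of the edge `12` and is joined to `q + 1`, so `H(p, q, r)` is not an
induced subgraph of such a graph. On the other hand such graphs realise every number `m` of edges: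
take the least `s` with `m ≤ s.choose 2` and `n - s` isolated vertices. On the other `s` vertices
`k = s.choose 2 - m ≤ s - 2` edges have to be missing, and a disjoint union of `⌊k / 3⌋` triangles
and `k % 3` single edges, which needs at most `k + 2 ≤ s` vertices, is a complement of the right
size.
-/

open SimpleGraph

/-- The graph `H(p,q,r) = (K_p ∖ K_{1,q}) ∪ rK_1`: the complete graph on the `p`
left-hand vertices, from which the `q` edges joining the vertex `0` to the vertices
`1, …, q` have been removed, together with `r` isolated right-hand vertices. -/
def Hgraph (p q r : ℕ) : SimpleGraph (Fin p ⊕ Fin r) :=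
  SimpleGraph.fromRel (fun a b =>
    ∃ i j : Fin p, a = Sum.inl i ∧ b = Sum.inl j ∧
      ¬ ((i.val = 0 ∧ 1 ≤ j.val ∧ j.val ≤ q) ∨ (j.val = 0 ∧ 1 ≤ i.val ∧ i.val ≤ q)))

/-- Complete multipartite graphs with isolated vertices added: `G` becomes complete multipartite
once its isolated vertices are discarded. -/
def IsCompleteMultipartiteOnSupport {V : Type*} (G : SimpleGraph V) : Prop :=
  (G.induce G.support).IsCompleteMultipartite

section Embeddings

variable {V W : Type*} {G : SimpleGraph V} {H : SimpleGraph W}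

lemma isCompleteMultipartiteOnSupport_iff_forall_not_isPathGraph3Compl :
    IsCompleteMultipartiteOnSupport G ↔
      ∀ v ∈ G.support, ∀ w₁ w₂, ¬ G.IsPathGraph3Compl v w₁ w₂ := by
  rw [IsCompleteMultipartiteOnSupport, ← not_iff_not,
    not_isCompleteMultipartite_iff_exists_isPathGraph3Compl]
  push Not
  constructor
  · rintro ⟨v, w₁, w₂, h⟩
    exact ⟨v, v.2, w₁, w₂, h.adj, h.not_adj_fst, h.not_adj_snd⟩
  · rintro ⟨v, hv, w₁, w₂, h⟩
    exact ⟨⟨v, hv⟩, ⟨w₁, h.adj.mem_support_left⟩, ⟨w₂, h.adj.mem_support_right⟩,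
      h.adj, h.not_adj_fst, h.not_adj_snd⟩

lemma IsCompleteMultipartiteOnSupport.of_embedding (hH : IsCompleteMultipartiteOnSupport H)
    (f : G ↪g H) : IsCompleteMultipartiteOnSupport G := by
  rw [isCompleteMultipartiteOnSupport_iff_forall_not_isPathGraph3Compl] at hH ⊢
  rintro v ⟨u, hvu⟩ w₁ w₂ h
  exact hH (f v) ⟨f u, f.map_adj_iff.2 hvu⟩ (f w₁) (f w₂)
    ⟨f.map_adj_iff.2 h.adj, mt f.map_adj_iff.1 h.not_adj_fst, mt f.map_adj_iff.1 h.not_adj_snd⟩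

lemma IsCompleteMultipartiteOnSupport.map (hG : IsCompleteMultipartiteOnSupport G) (f : V ↪ W) :
    IsCompleteMultipartiteOnSupport (G.map f) := by
  rw [isCompleteMultipartiteOnSupport_iff_forall_not_isPathGraph3Compl] at hG ⊢
  rintro _ ⟨_, _, v, u, hvu, rfl, rfl⟩ _ _ ⟨⟨_, w₁, w₂, hw, rfl, rfl⟩, h₁, h₂⟩
  rw [map_adj_apply] at h₁ h₂
  exact hG v ⟨u, hvu⟩ w₁ w₂ ⟨hw, h₁, h₂⟩

end Embeddings

section EdgeCount

variable {ι : Type*} [Fintype ι] [DecidableEq ι] (V : ι → Type*) [∀ i, Fintype (V i)]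

lemma neighborFinset_completeMultipartiteGraph (v : Σ i, V i) :
    (completeMultipartiteGraph V).neighborFinset v =
      (Finset.univ.erase v.1).sigma fun _ ↦ Finset.univ := by
  ext w
  simp [ne_comm]

lemma degree_completeMultipartiteGraph_add_card (v : Σ i, V i) :
    (completeMultipartiteGraph V).degree v + Fintype.card (V v.1) = ∑ i, Fintype.card (V i) := by
  rw [← card_neighborFinset_eq_degree, neighborFinset_completeMultipartiteGraph,
    Finset.card_sigma]
  exact Finset.sum_erase_add _ _ (Finset.mem_univ v.1)

lemma two_mul_card_edgeFinset_completeMultipartiteGraph_add_sum_sq :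
    2 * (completeMultipartiteGraph V).edgeFinset.card + ∑ i, Fintype.card (V i) ^ 2 =
      (∑ i, Fintype.card (V i)) ^ 2 := by
  have hsq : ∑ i, Fintype.card (V i) ^ 2 = ∑ v : Σ i, V i, Fintype.card (V v.1) :=
    calc ∑ i, Fintype.card (V i) ^ 2 = ∑ i, ∑ _ : V i, Fintype.card (V i) := by simp [sq]
      _ = ∑ v : Σ i, V i, Fintype.card (V v.1) := by rw [Fintype.sum_sigma]
  rw [← sum_degrees_eq_twice_card_edges, hsq, ← Finset.sum_add_distrib]
  simp [degree_completeMultipartiteGraph_add_card, sq]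

end EdgeCount

lemma two_mul_choose_two_add_self (n : ℕ) : 2 * n.choose 2 + n = n ^ 2 := by
  rw [Nat.choose_two_right, Nat.mul_div_cancel' (Nat.even_mul_pred_self n).two_dvd, sq,
    Nat.mul_sub_one, Nat.sub_add_cancel (Nat.le_mul_self n)]

/-- The sizes are threes, at most two twos, and ones; truncated subtraction makes `s ≤ 1` force
`k = 0`. -/
lemma exists_sum_eq_sum_sq_eq {s k : ℕ} (hk : k ≤ s - 2) :
    ∃ (ι : Type) (_ : Fintype ι) (a : ι → ℕ), ∑ i, a i = s ∧ ∑ i, a i ^ 2 = s + 2 * k := by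
  refine ⟨Fin (k / 3) ⊕ Fin (k % 3) ⊕ Fin (s - (k + k % 3)), inferInstance,
    Sum.elim (fun _ ↦ 3) (Sum.elim (fun _ ↦ 2) fun _ ↦ 1), ?_⟩
  simp only [Fintype.sum_sum_type, Sum.elim_inl, Sum.elim_inr, Finset.sum_const, Finset.card_univ,
    Fintype.card_fin, smul_eq_mul]
  omega

lemma exists_add_eq_choose_two {n m : ℕ} (hm : m ≤ n.choose 2) :
    ∃ s ≤ n, ∃ k ≤ s - 2, m + k = s.choose 2 := by
  induction n with
  | zero => exact ⟨0, le_rfl, 0, le_rfl, by simpa using hm⟩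
  | succ n ih =>
    by_cases hmn : m ≤ n.choose 2
    · obtain ⟨s, hsn, hs⟩ := ih hmn
      exact ⟨s, by omega, hs⟩
    · have hn : (n + 1).choose 2 = n + n.choose 2 := by simp [Nat.choose_succ_succ]
      exact ⟨n + 1, le_rfl, (n + 1).choose 2 - m, by omega, by omega⟩

lemma exists_isCompleteMultipartiteOnSupport_ncard_edgeSet_eq (W : Type*) [Fintype W] {m : ℕ}
    (hm : m ≤ (Fintype.card W).choose 2) :
    ∃ G : SimpleGraph W, IsCompleteMultipartiteOnSupport G ∧ G.edgeSet.ncard = m := by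
  classical
  obtain ⟨s, hsW, k, hk, hmk⟩ := exists_add_eq_choose_two hm
  obtain ⟨ι, _, a, hsum, hsq⟩ := exists_sum_eq_sum_sq_eq hk
  let K := completeMultipartiteGraph fun i ↦ Fin (a i)
  have hK : IsCompleteMultipartiteOnSupport K :=
    (completeMultipartiteGraph.isCompleteMultipartite _).induce
  have hKm : K.edgeFinset.card = m := by
    have hcard : 2 * K.edgeFinset.card + (s + 2 * k) = s ^ 2 := by
      simpa [hsum, hsq] using
        two_mul_card_edgeFinset_completeMultipartiteGraph_add_sum_sq fun i ↦ Fin (a i)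
    have hchoose := two_mul_choose_two_add_self s
    omega
  obtain ⟨f⟩ : Nonempty ((Σ i, Fin (a i)) ↪ W) :=
    Function.Embedding.nonempty_of_card_le (by simpa [hsum])
  refine ⟨K.map f, hK.map f, ?_⟩
  rw [← coe_edgeFinset, Set.ncard_coe_finset, card_edgeFinset_map, hKm]

theorem feasible_indFreeFamily_Hgraph_general {V : Type*} {G : SimpleGraph V}
    (hG : ¬ IsCompleteMultipartiteOnSupport G) : Feasible (IndFreeFamily G) := by
  intro n m _ hm
  rw [← Nat.choose_two_right] at hm
  obtain ⟨K, hK, hKm⟩ := exists_isCompleteMultipartiteOnSupport_ncard_edgeSet_eq (Fin n)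
    (m := m) (by rwa [Fintype.card_fin])
  refine ⟨K, ?_, hKm⟩
  rintro ⟨f, hf⟩
  exact hG (hK.of_embedding ⟨f, hf _ _⟩)

section Hgraph

variable {p q r : ℕ}

lemma Hgraph_adj_inl_inl {i j : Fin p} :
    (Hgraph p q r).Adj (Sum.inl i) (Sum.inl j) ↔
      i ≠ j ∧
        ¬ ((i.val = 0 ∧ 1 ≤ j.val ∧ j.val ≤ q) ∨ (j.val = 0 ∧ 1 ≤ i.val ∧ i.val ≤ q)) := by
  simp only [Hgraph, fromRel_adj, Sum.inl.injEq, ne_eq, exists_and_left, existsAndEq, true_and]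
  tauto

lemma not_isCompleteMultipartiteOnSupport_Hgraph (hq : 2 ≤ q) (hqp : q + 2 ≤ p) :
    ¬ IsCompleteMultipartiteOnSupport (Hgraph p q r) := by
  rw [isCompleteMultipartiteOnSupport_iff_forall_not_isPathGraph3Compl]
  intro h
  let v (i : ℕ) (hi : i < p := by omega) : Fin p ⊕ Fin r := Sum.inl ⟨i, hi⟩
  have h₀ : (Hgraph p q r).Adj (v 0) (v (q + 1)) := Hgraph_adj_inl_inl.2 (by simp)
  have h₁₂ : (Hgraph p q r).Adj (v 1) (v 2) := Hgraph_adj_inl_inl.2 (by simp)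
  have h₀₁ : ¬ (Hgraph p q r).Adj (v 0) (v 1) := fun hadj ↦
    (Hgraph_adj_inl_inl.1 hadj).2 (by simp [one_le_two.trans hq])
  have h₀₂ : ¬ (Hgraph p q r).Adj (v 0) (v 2) := fun hadj ↦
    (Hgraph_adj_inl_inl.1 hadj).2 (by simp [hq])
  exact h (v 0) h₀.mem_support_left (v 1) (v 2) ⟨h₁₂, h₀₁, h₀₂⟩

end Hgraph

/-- For all `p ≥ 4`, `r ≥ 0` and `2 ≤ q ≤ p - 2`, the family `𝓕(H(p,q,r))` of all
induced `H(p,q,r)`-free graphs is feasible. -/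
theorem feasible_indFreeFamily_Hgraph (p q r : ℕ) (hp : 4 ≤ p) (hq1 : 2 ≤ q)
    (hq2 : q ≤ p - 2) : Feasible (IndFreeFamily (Hgraph p q r)) :=
  feasible_indFreeFamily_Hgraph_general
    (not_isCompleteMultipartiteOnSupport_Hgraph hq1 (by omega))
end

section
/- For every integer n ≥ 5 and every integer m with ⌊n/2⌋ + 1 ≤ m ≤ n − 2, every finite simple graph on n vertices with exactly m edges contains an induced copy of P_3 ∪ K_1 or an induced copy of K_3 ∪ K_1; that is, the pair (n,m) is not feasible for the family 𝓕(P_3 ∪ K_1, K_3 ∪ K_1). -/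
open SimpleGraph

/-- The Paw: a triangle on the vertices `0, 1, 2` with the pendant edge `{2, 3}`. -/
def pawGraph : SimpleGraph (Fin 4) :=
  SimpleGraph.fromEdgeSet {s(0, 1), s(0, 2), s(1, 2), s(2, 3)}

/-- The Claw `K_{1,3}`: the center `0` joined to the three leaves `1, 2, 3`. -/
def clawGraph : SimpleGraph (Fin 4) :=
  SimpleGraph.fromEdgeSet {s(0, 1), s(0, 2), s(0, 3)}

/-- `P_3 ∪ K_1`: the path `0 - 1 - 2` on three vertices plus the isolated vertex `3`. -/
def p3k1Graph : SimpleGraph (Fin 4) :=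
  SimpleGraph.fromEdgeSet {s(0, 1), s(1, 2)}

/-- `K_3 ∪ K_1`: the triangle on `0, 1, 2` plus the isolated vertex `3`. -/
def k3k1Graph : SimpleGraph (Fin 4) :=
  SimpleGraph.fromEdgeSet {s(0, 1), s(0, 2), s(1, 2)}

/-!
More than `n / 2` edges force a path `a - b - c` on three vertices, and fewer than `n - 1` edges
force the graph to be disconnected. A vertex outside the component of `b` is nonadjacent to all of
`a`, `b`, `c`, and together they induce `P_3 ∪ K_1` or `K_3 ∪ K_1` according to whether `a` and `c`
are adjacent.
-/

variable {V : Type*} {H : SimpleGraph V} {a b c v : V}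

theorem injective_vec_of_adj_of_not_adj (hab : H.Adj a b) (hbc : H.Adj b c) (hac : a ≠ c)
    (hav : ¬H.Adj a v) (hbv : ¬H.Adj b v) : Function.Injective ![a, b, c, v] := by
  have hav' : a ≠ v := by rintro rfl; exact hbv hab.symm
  have hbv' : b ≠ v := by rintro rfl; exact hav hab
  have hcv' : c ≠ v := by rintro rfl; exact hbv hbc
  rw [← List.nodup_ofFn]
  simp [hab.ne, hbc.ne, hac, hav', hbv', hcv']

theorem indContains_p3k1Graph_of_adj (hab : H.Adj a b) (hbc : H.Adj b c) (hne : a ≠ c)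
    (hac : ¬H.Adj a c) (hav : ¬H.Adj a v) (hbv : ¬H.Adj b v) (hcv : ¬H.Adj c v) :
    IndContains p3k1Graph H := by
  refine ⟨⟨![a, b, c, v], injective_vec_of_adj_of_not_adj hab hbc hne hav hbv⟩, fun i j => ?_⟩
  fin_cases i <;> fin_cases j <;>
    simp [p3k1Graph, hab, hab.symm, hbc, hbc.symm, hac, mt Adj.symm hac, hav, mt Adj.symm hav,
      hbv, mt Adj.symm hbv, hcv, mt Adj.symm hcv]

theorem indContains_k3k1Graph_of_adj (hab : H.Adj a b) (hbc : H.Adj b c) (hac : H.Adj a c)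
    (hav : ¬H.Adj a v) (hbv : ¬H.Adj b v) (hcv : ¬H.Adj c v) :
    IndContains k3k1Graph H := by
  refine ⟨⟨![a, b, c, v], injective_vec_of_adj_of_not_adj hab hbc hac.ne hav hbv⟩, fun i j => ?_⟩
  fin_cases i <;> fin_cases j <;>
    simp [k3k1Graph, hab, hab.symm, hbc, hbc.symm, hac, hac.symm, hav, mt Adj.symm hav,
      hbv, mt Adj.symm hbv, hcv, mt Adj.symm hcv]

theorem indContains_p3k1Graph_or_k3k1Graph_of_not_connected (hH : ¬H.Connected)
    (hab : H.Adj a b) (hbc : H.Adj b c) (hac : a ≠ c) :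
    IndContains p3k1Graph H ∨ IndContains k3k1Graph H := by
  obtain ⟨v, hv⟩ : ∃ v, ¬H.Reachable b v := by
    contrapose! hH
    exact H.connected_iff_exists_forall_reachable.mpr ⟨b, hH⟩
  have hav : ¬H.Adj a v := fun h => hv (hab.symm.reachable.trans h.reachable)
  have hbv : ¬H.Adj b v := fun h => hv h.reachable
  have hcv : ¬H.Adj c v := fun h => hv (hbc.reachable.trans h.reachable)
  by_cases h : H.Adj a c
  · exact .inr (indContains_k3k1Graph_of_adj hab hbc h hav hbv hcv)
  · exact .inl (indContains_p3k1Graph_of_adj hab hbc hac h hav hbv hcv)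

theorem not_connected_of_ncard_edgeSet_add_one_lt (h : H.edgeSet.ncard + 1 < Nat.card V) :
    ¬H.Connected := fun hH =>
  h.not_ge hH.card_vert_le_card_edgeSet_add_one

theorem exists_lt_degree_of_card_mul_lt [Fintype V] [DecidableRel H.Adj] {k : ℕ}
    (h : Fintype.card V * k < 2 * H.edgeFinset.card) : ∃ v, k < H.degree v := by
  rw [← H.sum_degrees_eq_twice_card_edges, ← smul_eq_mul, ← Finset.card_univ,
    ← Finset.sum_const] at h
  obtain ⟨v, -, hv⟩ := Finset.exists_lt_of_sum_lt h
  exact ⟨v, hv⟩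

theorem exists_adj_adj_ne_of_card_lt [Finite V] (h : Nat.card V < 2 * H.edgeSet.ncard) :
    ∃ a b c, H.Adj a b ∧ H.Adj b c ∧ a ≠ c := by
  classical
  have := Fintype.ofFinite V
  rw [Nat.card_eq_fintype_card, ← coe_edgeFinset, Set.ncard_coe_finset] at h
  obtain ⟨b, hb⟩ := exists_lt_degree_of_card_mul_lt (k := 1) (by rwa [mul_one])
  obtain ⟨a, ha, c, hc, hac⟩ := Finset.one_lt_card.mp hb
  rw [mem_neighborFinset] at ha hc
  exact ⟨a, b, c, ha.symm, hc, hac⟩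

theorem indContains_p3k1Graph_or_k3k1Graph_of_card [Finite V]
    (hlower : Nat.card V < 2 * H.edgeSet.ncard) (hupper : H.edgeSet.ncard + 1 < Nat.card V) :
    IndContains p3k1Graph H ∨ IndContains k3k1Graph H := by
  obtain ⟨a, b, c, hab, hbc, hac⟩ := exists_adj_adj_ne_of_card_lt hlower
  exact indContains_p3k1Graph_or_k3k1Graph_of_not_connected
    (not_connected_of_ncard_edgeSet_add_one_lt hupper) hab hbc hac

/-- For `n ≥ 5` and `⌊n/2⌋ + 1 ≤ m ≤ n - 2`, every graph on `n` vertices with exactly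
`m` edges contains an induced `P_3 ∪ K_1` or an induced `K_3 ∪ K_1`; that is, the pair
`(n, m)` is not feasible for the family `𝓕(P_3 ∪ K_1, K_3 ∪ K_1)`. -/
theorem forces_p3k1_or_k3k1 (n m : ℕ) (hn : 5 ≤ n) (hm1 : n / 2 + 1 ≤ m)
    (hm2 : m ≤ n - 2) :
    (∀ (V : Type) [Fintype V], Fintype.card V = n → ∀ H : SimpleGraph V,
      H.edgeSet.ncard = m → IndContains p3k1Graph H ∨ IndContains k3k1Graph H) ∧
    ¬ FeasiblePair (fun _ H => ¬ IndContains p3k1Graph H ∧ ¬ IndContains k3k1Graph H) n m := by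
  have forces {V : Type} [Fintype V] (hV : Fintype.card V = n) (H : SimpleGraph V)
      (hH : H.edgeSet.ncard = m) : IndContains p3k1Graph H ∨ IndContains k3k1Graph H := by
    rw [← Nat.card_eq_fintype_card] at hV
    exact indContains_p3k1Graph_or_k3k1Graph_of_card (by lia) (by lia)
  refine ⟨fun V _ hV => forces hV, ?_⟩
  rintro ⟨G, ⟨hp3k1, hk3k1⟩, hG⟩
  exact (forces (Fintype.card_fin n) G hG).elim hp3k1 hk3k1
end
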